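/- arXiv:1403.7881 — 2 statements merged into one kernel-verified Lean document; each statement's English description precedes it below -/
import Mathlib

section
/- Let G be a numeration system with coefficients a_0 ≥ a_1 ≥ … ≥ a_{d−1} ≥ 1, irreducible characteristic polynomial and Pisot characteristic root β. For every cylinder set Z_j of length at most j, the measure satisfies μ(Z_j) ≥ β^{d−1} / (β^j (β^{d−1} + β^{d−2} + … + 1)). In particular, for a cylinder Z of length K the quantities F_{K,j} − a_0 F_{K,j−1} − … − a_{j−1} F_{K,0} are nonnegative for 0 ≤ j ≤ d. -/
open scoped BigOperators
open scoped Classical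

/-- A numeration system `G = (G_n)` defined by a linear recurrence with
nonincreasing positive coefficients `a_0 ≥ a_1 ≥ … ≥ a_{d-1} ≥ 1`, together with
the regular (greedy) digit expansion `dig n k = ε_k(n)` of every nonnegative integer. -/
structure NumerationSystem where
  d : ℕ
  hd : 1 ≤ d
  a : ℕ → ℕ
  ha_anti : ∀ i j, i ≤ j → j < d → a j ≤ a i
  ha_pos : ∀ i, i < d → 1 ≤ a i
  G : ℕ → ℕ
  hG0 : G 0 = 1
  hG_small : ∀ k, 0 < k → k < d → G k = (∑ i ∈ Finset.range k, a i * G (k - 1 - i)) + 1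
  hG_rec : ∀ n : ℕ, G (n + d) = ∑ i ∈ Finset.range d, a i * G (n + d - 1 - i)
  dig : ℕ → ℕ → ℕ
  hdig_fin : ∀ n : ℕ, ∃ K, (∀ k, K ≤ k → dig n k = 0) ∧ n = ∑ k ∈ Finset.range K, dig n k * G k
  hdig_reg : ∀ n K, ∑ k ∈ Finset.range K, dig n k * G k < G K

namespace NumerationSystem

/-- The characteristic polynomial `X^d - a_0 X^{d-1} - … - a_{d-1}` of the numeration system. -/
noncomputable def charPoly (S : NumerationSystem) : Polynomial ℤ :=
  Polynomial.X ^ S.d -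
    ∑ i ∈ Finset.range S.d, Polynomial.C (S.a i : ℤ) * Polynomial.X ^ (S.d - 1 - i)

/-- `β` is the characteristic root of `S`: the characteristic polynomial is irreducible,
`β` is a root, `β > 1`, and every other complex root has modulus `< 1` (so `β` is Pisot). -/
def IsCharRoot (S : NumerationSystem) (β : ℝ) : Prop :=
  Irreducible (S.charPoly.map (Int.castRingHom ℚ)) ∧
  (Polynomial.aeval β) S.charPoly = 0 ∧ 1 < β ∧
  ∀ z : ℂ, (Polynomial.aeval z) S.charPoly = 0 → z ≠ (β : ℂ) → ‖z‖ < 1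

/-- `F_{K,r}` : the number of `n < G (K+r)` whose regular expansion starts with the word `w`. -/
noncomputable def F (S : NumerationSystem) (w : ℕ → ℕ) (K r : ℕ) : ℕ :=
  ((Finset.range (S.G (K + r))).filter (fun n => ∀ i, i < K → S.dig n i = w i)).card

/-- The measure `μ` of the cylinder set given by the word `w` of length `K`. -/
noncomputable def mu (S : NumerationSystem) (β : ℝ) (w : ℕ → ℕ) (K : ℕ) : ℝ :=
  (∑ j ∈ Finset.range S.d,
      ((S.F w K j : ℝ) - ∑ i ∈ Finset.range j, (S.a i : ℝ) * (S.F w K (j - 1 - i) : ℝ))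
        * β ^ (S.d - 1 - j)) /
    (β ^ K * ∑ i ∈ Finset.range S.d, β ^ i)

/-- The extended `β`-adic Monna map on digit sequences:
`ψ_β(x) = ∑_{k ≥ 0} ∑_{i < x_k} μ(Z(x_0,…,x_{k-1},i))`. -/
noncomputable def psiSeq (S : NumerationSystem) (β : ℝ) (x : ℕ → ℕ) : ℝ :=
  ∑' k : ℕ, ∑ i ∈ Finset.range (x k), S.mu β (fun m => if m < k then x m else i) (k + 1)

/-- The extended `β`-adic Monna map on integers (via the regular `G`-expansion). -/
noncomputable def psi (S : NumerationSystem) (β : ℝ) (n : ℕ) : ℝ :=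
  S.psiSeq β (S.dig n)

/-- A digit sequence is regular if all its partial sums satisfy the greedy condition. -/
def RegularSeq (S : NumerationSystem) (x : ℕ → ℕ) : Prop :=
  ∀ K, ∑ k ∈ Finset.range K, x k * S.G k < S.G K

/-- A finite word of length `K` is a regular digit string. -/
def RegularWord (S : NumerationSystem) (w : ℕ → ℕ) (K : ℕ) : Prop :=
  ∀ K', K' ≤ K → ∑ k ∈ Finset.range K', w k * S.G k < S.G K'

/-- The Galois closure `K = ℚ(β_1,…,β_d)` of `ℚ(β)`, realized inside `ℂ` as the field
generated by all roots of the characteristic polynomial. -/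
noncomputable def galoisClosure (S : NumerationSystem) : IntermediateField ℚ ℂ :=
  IntermediateField.adjoin ℚ {z : ℂ | (Polynomial.aeval z) S.charPoly = 0}

/-- `k` is maximal with `a_0 = a_1 = … = a_k`. -/
def IsPlateau (S : NumerationSystem) (k : ℕ) : Prop :=
  k < S.d ∧ (∀ i, i ≤ k → S.a i = S.a 0) ∧ (k + 1 < S.d → S.a (k + 1) ≠ S.a 0)

/-- `βc 0, …, βc (d-1)` enumerate the (distinct) roots of the characteristic polynomial and
`b` gives the coefficients in the explicit formula `G_n = ∑_j b_j β_j^n`. -/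
def IsRootData (S : NumerationSystem) (βc b : ℕ → ℂ) : Prop :=
  (∀ j, j < S.d → (Polynomial.aeval (βc j)) S.charPoly = 0) ∧
  (∀ j j', j < S.d → j' < S.d → βc j = βc j' → j = j') ∧
  ∀ n : ℕ, (S.G n : ℂ) = ∑ j ∈ Finset.range S.d, b j * βc j ^ n

end NumerationSystem

/-- The maximal digit pattern: `ε_i = a_0` if `(k+1) ∤ i` or `i = 0`, and `ε_i = a_0 - 1`
otherwise. -/
def maxPattern (a0 k i : ℕ) : ℕ :=
  if (k + 1) ∣ i ∧ i ≠ 0 then a0 - 1 else a0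

/-- The constant `A = 1 + ∑_j a_0 b_j/(1-β_j) - ∑_j b_j/(1-β_j^{k+1})` from the corner
analysis (for a corner coordinate equal to 1). -/
noncomputable def cornerA (S : NumerationSystem) (βc b : ℕ → ℂ) (k : ℕ) : ℂ :=
  1 + ∑ j ∈ Finset.range S.d, (S.a 0 : ℂ) * b j / (1 - βc j)
    - ∑ j ∈ Finset.range S.d, b j / (1 - βc j ^ (k + 1))

/-- The coefficient `c_j^{(i)} = ∑_{m ≥ 0} b_j ε_{n_0+m}(N) β_j^m` (corner coordinate 0). -/
noncomputable def cornerC0 (S : NumerationSystem) (βc b : ℕ → ℂ) (N n0 j : ℕ) : ℂ :=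
  ∑' m : ℕ, (S.dig N (n0 + m) : ℂ) * b j * βc j ^ m

/-- The coefficient `c_j^{(i)}` for a corner coordinate equal to 1. -/
noncomputable def cornerC1 (S : NumerationSystem) (βc b : ℕ → ℂ) (k N n1 j : ℕ) : ℂ :=
  cornerC0 S βc b N n1 j - (S.a 0 : ℂ) * b j / (1 - βc j)
    + b j * βc j ^ ((n1 + k) / (k + 1) * (k + 1) - n1) / (1 - βc j ^ (k + 1))

/-- Lexicographic comparison of words of length `n`, reading the highest digit first:
`w <_lex w'` iff they differ at some position `m` with `w m < w' m` and agree above `m`. -/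
def LexLtBelow (n : ℕ) (w w' : ℕ → ℕ) : Prop :=
  ∃ m, m < n ∧ w m < w' m ∧ ∀ j, m < j → j < n → w j = w' j

/-- The exponent `H` of the corner avoidance theorem. -/
noncomputable def cornerH {s : ℕ} (h : Fin s → ℕ) : ℕ :=
  if ∀ i, h i = 0 then 2 else if ∀ i, h i = 1 then s else 1 + ∑ i, h i

/-- A sequence `(x_n)_{n>0}` in `[0,1)^s` is uniformly distributed modulo 1. -/
def IsUniformlyDistributed {s : ℕ} (x : ℕ → Fin s → ℝ) : Prop :=
  ∀ a b : Fin s → ℝ, (∀ i, 0 ≤ a i) → (∀ i, a i ≤ b i) → (∀ i, b i ≤ 1) →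
    Filter.Tendsto
      (fun N : ℕ =>
        (((Finset.Icc 1 N).filter fun n => ∀ i, a i ≤ x n i ∧ x n i < b i).card : ℝ) / (N : ℝ))
      Filter.atTop (nhds (∏ i, (b i - a i)))

/-!
For `n < G_L` and `c G_L + n < G_{L+1}`, the numbers `n` and `c G_L + n` share their digits
below `L`. A cylinder of length `K ≤ L` therefore meets `[0, c G_L + x)` in `c` copies of its
trace on `[0, G_L)` and one copy of its trace on `[0, x)`, as long as `x ≤ G_L` and
`c G_L + x ≤ G_{L+1}`.
Since the coefficients are nonincreasing, this applies to each term in turn of the block sum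
`a_0 G_{M-1} + … + a_{j-1} G_{M-j}`, which the recurrence bounds by `G_M`; taking `M = K + j` and
comparing counts gives `a_0 F_{K,j-1} + … + a_{j-1} F_{K,0} ≤ F_{K,j}`.
All terms in the numerator of `μ` are then nonnegative, and the first one is at least `β^{d-1}`
because a regular word occurs among the expansions of the integers below `G_K`.
-/

theorem eq_and_eq_of_add_mul_eq_add_mul {g r s x y : ℕ} (hr : r < g) (hs : s < g)
    (h : r + x * g = s + y * g) : r = s ∧ x = y := by
  rw [mul_comm x, mul_comm y] at h
  obtain ⟨hdiv, hmod⟩ := (Nat.div_mod_unique (r.zero_le.trans_lt hr)).2 ⟨h, hr⟩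
  obtain ⟨hdiv', hmod'⟩ := (Nat.div_mod_unique (s.zero_le.trans_lt hs)).2 ⟨rfl, hs⟩
  exact ⟨hmod.symm.trans hmod', hdiv.symm.trans hdiv'⟩

theorem eq_of_greedy_sum_eq {G x y : ℕ → ℕ} {K : ℕ}
    (hx : ∀ k ≤ K, ∑ i ∈ Finset.range k, x i * G i < G k)
    (hy : ∀ k ≤ K, ∑ i ∈ Finset.range k, y i * G i < G k)
    (h : ∑ i ∈ Finset.range K, x i * G i = ∑ i ∈ Finset.range K, y i * G i)
    {i : ℕ} (hi : i < K) : x i = y i := by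
  induction K with
  | zero => exact absurd hi i.not_lt_zero
  | succ K ih =>
    rw [Finset.sum_range_succ, Finset.sum_range_succ] at h
    obtain ⟨hlow, htop⟩ :=
      eq_and_eq_of_add_mul_eq_add_mul (hx K K.le_succ) (hy K K.le_succ) h
    rcases Nat.lt_succ_iff_lt_or_eq.1 hi with hi | rfl
    · exact ih (fun k hk => hx k (hk.trans K.le_succ)) (fun k hk => hy k (hk.trans K.le_succ))
        hlow hi
    · exact htop

theorem count_congr_of_lt {p q : ℕ → Prop} [DecidablePred p] [DecidablePred q] {n : ℕ}
    (h : ∀ k < n, (p k ↔ q k)) : Nat.count p n = Nat.count q n :=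
  le_antisymm (Nat.count_mono_left fun k hk => (h k hk).1)
    (Nat.count_mono_left fun k hk => (h k hk).2)

theorem count_mul_add_of_shift_iff {p : ℕ → Prop} [DecidablePred p] {g c x : ℕ} (hx : x ≤ g)
    (hp : ∀ m n, n < g → m * g + n < c * g + x → (p (m * g + n) ↔ p n)) :
    Nat.count p (c * g + x) = c * Nat.count p g + Nat.count p x := by
  induction c generalizing x with
  | zero => simp
  | succ c ih =>
    have count_full_blocks : Nat.count p ((c + 1) * g) = (c + 1) * Nat.count p g := by
      rw [Nat.succ_mul, ih le_rfl fun m n hn hmn => hp m n hn (by lia), Nat.succ_mul]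
    rw [Nat.count_add, count_full_blocks]
    congr 1
    exact count_congr_of_lt fun n hn => hp (c + 1) n (hn.trans_le hx) (by lia)

namespace NumerationSystem

section Digits

variable (S : NumerationSystem)

theorem sum_mul_G_le {b : ℕ → ℕ} {t M : ℕ} (htd : t ≤ S.d) (htM : t ≤ M)
    (hb : ∀ i < t, b i ≤ S.a i) :
    ∑ i ∈ Finset.range t, b i * S.G (M - 1 - i) ≤ S.G M := by
  refine (Finset.sum_le_sum fun i hi =>
    Nat.mul_le_mul_right _ (hb i (Finset.mem_range.1 hi))).trans ?_
  rcases lt_or_ge M S.d with hM | hM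
  · rcases M.eq_zero_or_pos with rfl | hM0
    · simp [Nat.le_zero.1 htM]
    · rw [S.hG_small M hM0 hM]
      exact (Finset.sum_le_sum_of_subset (Finset.range_mono htM)).trans (Nat.le_succ _)
  · obtain ⟨n, rfl⟩ := Nat.exists_eq_add_of_le' hM
    rw [S.hG_rec n]
    exact Finset.sum_le_sum_of_subset (Finset.range_mono htd)

theorem G_monotone : Monotone S.G := by
  refine monotone_nat_of_le_succ fun n => ?_
  have h : S.a 0 * S.G n ≤ S.G (n + 1) := by
    simpa using S.sum_mul_G_le (b := S.a) (M := n + 1) S.hd n.succ_pos fun _ _ => le_rfl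
  exact (Nat.le_mul_of_pos_left _ (S.ha_pos 0 S.hd)).trans h

theorem regularWord_dig (n K : ℕ) : S.RegularWord (S.dig n) K :=
  fun k _ => S.hdig_reg n k

theorem dig_mul_G_le (n k : ℕ) : S.dig n k * S.G k ≤ n := by
  obtain ⟨N, hzero, hsum⟩ := S.hdig_fin n
  rcases lt_or_ge k N with hk | hk
  · exact (Finset.single_le_sum (f := fun i => S.dig n i * S.G i) (fun _ _ => Nat.zero_le _)
      (Finset.mem_range.2 hk)).trans hsum.ge
  · simp [hzero k hk]

theorem dig_eq_zero_of_lt_G {n L k : ℕ} (hn : n < S.G L) (hk : L ≤ k) : S.dig n k = 0 := by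
  have h : S.dig n k * S.G k < 1 * S.G k := by
    rw [one_mul]
    exact (S.dig_mul_G_le n k).trans_lt (hn.trans_le (S.G_monotone hk))
  exact Nat.lt_one_iff.1 (Nat.lt_of_mul_lt_mul_right h)

theorem sum_dig_mul_G {n L : ℕ} (hn : n < S.G L) :
    ∑ k ∈ Finset.range L, S.dig n k * S.G k = n := by
  obtain ⟨N, hzero, hsum⟩ := S.hdig_fin n
  calc ∑ k ∈ Finset.range L, S.dig n k * S.G k
      = ∑ k ∈ Finset.range (max N L), S.dig n k * S.G k :=
        (Finset.eventually_constant_sum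
          (fun k hk => by rw [S.dig_eq_zero_of_lt_G hn hk, zero_mul]) (le_max_right N L)).symm
    _ = ∑ k ∈ Finset.range N, S.dig n k * S.G k :=
        Finset.eventually_constant_sum
          (fun k hk => by rw [hzero k hk, zero_mul]) (le_max_left N L)
    _ = n := hsum.symm

variable {S}

theorem RegularWord.dig_sum_mul_G {w : ℕ → ℕ} {K i : ℕ} (hw : S.RegularWord w K) (hi : i < K) :
    S.dig (∑ k ∈ Finset.range K, w k * S.G k) i = w i :=
  eq_of_greedy_sum_eq (S.regularWord_dig _ K) hw (S.sum_dig_mul_G (hw K le_rfl)) hi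

variable (S)

theorem dig_mul_G_add {c n L i : ℕ} (hn : n < S.G L) (hc : c * S.G L + n < S.G (L + 1))
    (hi : i < L) : S.dig (c * S.G L + n) i = S.dig n i := by
  set m := c * S.G L + n with hm
  have expansion_m :
      ∑ k ∈ Finset.range L, S.dig m k * S.G k + S.dig m L * S.G L = n + c * S.G L := by
    rw [← Finset.sum_range_succ, S.sum_dig_mul_G hc, hm, add_comm]
  have low_digits : ∑ k ∈ Finset.range L, S.dig m k * S.G k = n :=
    (eq_and_eq_of_add_mul_eq_add_mul (S.hdig_reg m L) hn expansion_m).1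
  rw [← (S.regularWord_dig m L).dig_sum_mul_G hi, low_digits]

end Digits

section Cylinder

variable (S : NumerationSystem) (w : ℕ → ℕ) (K : ℕ)

/-- The number of integers below `x` in the cylinder of length `K` given by `w`. It extends the
paper's `F_{K,r}`, the value at `x = G (K + r)`, to bounds `x` that are not terms of `G`. -/
def cylinderCount (x : ℕ) : ℕ :=
  Nat.count (fun n => ∀ i, i < K → S.dig n i = w i) x

theorem F_eq_cylinderCount (r : ℕ) : S.F w K r = S.cylinderCount w K (S.G (K + r)) := by
  rw [F, cylinderCount, Nat.count_eq_card_filter_range]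

theorem cylinderCount_monotone : Monotone (S.cylinderCount w K) :=
  Nat.count_monotone _

variable {K}

theorem cylinderCount_mul_G_add {L c x : ℕ} (hKL : K ≤ L) (hx : x ≤ S.G L)
    (hc : c * S.G L + x ≤ S.G (L + 1)) :
    S.cylinderCount w K (c * S.G L + x) =
      c * S.cylinderCount w K (S.G L) + S.cylinderCount w K x :=
  count_mul_add_of_shift_iff hx fun m n hn hmn => forall₂_congr fun i hi => by
    rw [S.dig_mul_G_add hn (hmn.trans_le hc) (hi.trans_le hKL)]

/-- The hypothesis on `b` passes to `fun i => b (i + 1)`, so that the induction can peel off the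
leading term of the sum. -/
theorem cylinderCount_sum_mul_G {b : ℕ → ℕ} {t M : ℕ} (htd : t ≤ S.d) (hKM : K + t ≤ M)
    (hb : ∀ i j, i ≤ j → j < t → b j ≤ S.a i) :
    S.cylinderCount w K (∑ i ∈ Finset.range t, b i * S.G (M - 1 - i)) =
      ∑ i ∈ Finset.range t, b i * S.cylinderCount w K (S.G (M - 1 - i)) := by
  induction t generalizing b M with
  | zero => simp [cylinderCount]
  | succ t ih =>
    obtain ⟨L, rfl⟩ : ∃ L, M = L + 1 := Nat.exists_eq_add_of_le' (by lia)
    have hb_tail (i j : ℕ) (hij : i ≤ j) (hj : j < t) : b (j + 1) ≤ S.a i :=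
      hb i (j + 1) (by lia) (by lia)
    have block_le :=
      S.sum_mul_G_le (b := b) (M := L + 1) htd (by lia) fun i hi => hb i i le_rfl hi
    have tail_le := S.sum_mul_G_le (b := fun i => b (i + 1)) (M := L) (by lia) (by lia)
      fun i hi => hb_tail i i le_rfl hi
    have count_tail := ih (b := fun i => b (i + 1)) (M := L) (by lia) (by lia) hb_tail
    simp only [Finset.sum_range_succ', Nat.add_sub_cancel, Nat.sub_zero,
      add_comm _ (b 0 * _)] at block_le ⊢
    simp only [Nat.sub_sub, add_comm 1] at tail_le count_tail
    rw [S.cylinderCount_mul_G_add w (by lia) tail_le block_le, count_tail]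

variable (K)

theorem sum_mul_F_le_F {j : ℕ} (hj : j ≤ S.d) :
    ∑ i ∈ Finset.range j, S.a i * S.F w K (j - 1 - i) ≤ S.F w K j :=
  calc ∑ i ∈ Finset.range j, S.a i * S.F w K (j - 1 - i)
      = ∑ i ∈ Finset.range j, S.a i * S.cylinderCount w K (S.G (K + j - 1 - i)) :=
        Finset.sum_congr rfl fun i hi => by
          have := Finset.mem_range.1 hi
          rw [F_eq_cylinderCount, show K + (j - 1 - i) = K + j - 1 - i by lia]
    _ = S.cylinderCount w K (∑ i ∈ Finset.range j, S.a i * S.G (K + j - 1 - i)) :=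
        (S.cylinderCount_sum_mul_G w hj le_rfl fun i k hik hk =>
          S.ha_anti i k hik (hk.trans_le hj)).symm
    _ ≤ S.cylinderCount w K (S.G (K + j)) :=
        S.cylinderCount_monotone w K
          (S.sum_mul_G_le hj (Nat.le_add_left j K) fun _ _ => le_rfl)
    _ = S.F w K j := (S.F_eq_cylinderCount w K j).symm

variable {S w K}

theorem RegularWord.F_zero_pos (hw : S.RegularWord w K) : 0 < S.F w K 0 :=
  Finset.card_pos.2 ⟨∑ k ∈ Finset.range K, w k * S.G k,
    Finset.mem_filter.2 ⟨Finset.mem_range.2 (hw K le_rfl), fun _ hi => hw.dig_sum_mul_G hi⟩⟩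

end Cylinder

section Measure

variable {S : NumerationSystem} {β : ℝ} {w : ℕ → ℕ} {K : ℕ}

theorem one_le_of_aeval_charPoly_eq_zero (hβ : 0 < β)
    (hroot : Polynomial.aeval β S.charPoly = 0) : 1 ≤ β := by
  have hrec : β ^ S.d = ∑ i ∈ Finset.range S.d, (S.a i : ℝ) * β ^ (S.d - 1 - i) := by
    simpa [charPoly, sub_eq_zero] using hroot
  have hlast : S.d - 1 < S.d := Nat.sub_one_lt_of_lt S.hd
  have one_le_pow : 1 ≤ β ^ S.d :=
    calc (1 : ℝ) ≤ S.a (S.d - 1) := by exact_mod_cast S.ha_pos _ hlast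
      _ = (S.a (S.d - 1) : ℝ) * β ^ (S.d - 1 - (S.d - 1)) := by simp
      _ ≤ ∑ i ∈ Finset.range S.d, (S.a i : ℝ) * β ^ (S.d - 1 - i) :=
        Finset.single_le_sum (f := fun i => (S.a i : ℝ) * β ^ (S.d - 1 - i))
          (fun i _ => by positivity) (Finset.mem_range.2 hlast)
      _ = β ^ S.d := hrec.symm
  exact (one_le_pow_iff_of_nonneg hβ.le (Nat.pos_iff_ne_zero.1 S.hd)).1 one_le_pow

theorem RegularWord.pow_div_le_mu (hw : S.RegularWord w K) (hβ : 0 < β) :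
    β ^ (S.d - 1) / (β ^ K * ∑ i ∈ Finset.range S.d, β ^ i) ≤ S.mu β w K := by
  have hsum := geom_sum_pos hβ.le (Nat.pos_iff_ne_zero.1 S.hd)
  refine div_le_div_of_nonneg_right ?_ (by positivity)
  let term (j : ℕ) : ℝ :=
    ((S.F w K j : ℝ) - ∑ i ∈ Finset.range j, (S.a i : ℝ) * (S.F w K (j - 1 - i) : ℝ)) *
      β ^ (S.d - 1 - j)
  have term_nonneg (j : ℕ) (hj : j ∈ Finset.range S.d) : 0 ≤ term j := by
    refine mul_nonneg (sub_nonneg.2 ?_) (by positivity)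
    exact_mod_cast S.sum_mul_F_le_F w K (Finset.mem_range.1 hj).le
  have one_le_F : (1 : ℝ) ≤ S.F w K 0 := by exact_mod_cast hw.F_zero_pos
  calc β ^ (S.d - 1) ≤ S.F w K 0 * β ^ (S.d - 1) :=
        le_mul_of_one_le_left (by positivity) one_le_F
    _ = term 0 := by simp [term]
    _ ≤ ∑ j ∈ Finset.range S.d, term j :=
        Finset.single_le_sum term_nonneg (Finset.mem_range.2 S.hd)

end Measure

end NumerationSystem

theorem mu_lower_bound_and_F_nonneg_general
    (S : NumerationSystem) (β : ℝ) (hβ : 0 < β) (hroot : Polynomial.aeval β S.charPoly = 0) :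
    (∀ w K, ∀ j, j ≤ S.d →
        (∑ i ∈ Finset.range j, (S.a i : ℝ) * (S.F w K (j - 1 - i) : ℝ)) ≤ (S.F w K j : ℝ)) ∧
    (∀ w K j, S.RegularWord w K → K ≤ j →
        β ^ (S.d - 1) / (β ^ j * ∑ i ∈ Finset.range S.d, β ^ i) ≤ S.mu β w K) := by
  refine ⟨fun w K j hj => by exact_mod_cast S.sum_mul_F_le_F w K hj, fun w K j hw hKj => ?_⟩
  have hβ1 : 1 ≤ β := NumerationSystem.one_le_of_aeval_charPoly_eq_zero hβ hroot
  have hsum := geom_sum_pos hβ.le (Nat.pos_iff_ne_zero.1 S.hd)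
  calc β ^ (S.d - 1) / (β ^ j * ∑ i ∈ Finset.range S.d, β ^ i)
      ≤ β ^ (S.d - 1) / (β ^ K * ∑ i ∈ Finset.range S.d, β ^ i) := by gcongr
    _ ≤ S.mu β w K := hw.pow_div_le_mu hβ

/-- For every cylinder set of length `K ≤ j` one has
`μ(Z) ≥ β^{d-1}/(β^j (β^{d-1}+…+1))`; in particular, the quantities
`F_{K,j} - a_0 F_{K,j-1} - … - a_{j-1} F_{K,0}` are nonnegative for `0 ≤ j ≤ d`. -/
theorem mu_lower_bound_and_F_nonneg
    (S : NumerationSystem) (β : ℝ) (hβ : S.IsCharRoot β) :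
    (∀ w K, S.RegularWord w K → ∀ j, j ≤ S.d →
        (∑ i ∈ Finset.range j, (S.a i : ℝ) * (S.F w K (j - 1 - i) : ℝ)) ≤ (S.F w K j : ℝ)) ∧
    (∀ w K j, S.RegularWord w K → K ≤ j →
        β ^ (S.d - 1) / (β ^ j * ∑ i ∈ Finset.range S.d, β ^ i) ≤ S.mu β w K) := by
  obtain ⟨hF, hmu⟩ :=
    mu_lower_bound_and_F_nonneg_general S β (zero_lt_one.trans hβ.2.2.1) hβ.2.1
  exact ⟨fun w K _ => hF w K, hmu⟩
end

section
/- In the corner analysis of the β-adic Halton sequence, the quantities c_j^{(i)} (for 1 ≤ i ≤ s and 2 ≤ j ≤ d_i), the constants A_i (1 ≤ i ≤ s), and the common denominator D (the smallest positive rational integer such that all D·c_j^{(i)} and D·A_i are algebraic integers) satisfy |c_j^{(i)}| ≤ C, |A_i| ≤ C and |D| ≤ C, where C is a constant depending only on the s-tuple of numeration systems (G^{(1)},…,G^{(s)}) and not on N or the n_i. Moreover each A_i is a rational number. -/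
open scoped BigOperators
open scoped Classical

/-!
Put `g_j = b_j / (1 - β_j ^ (k + 1))`. The digits of `N` are at most `a_0`, so for `j ≠ 1`, where
`|β_j| < 1`, the digit series of `c_j` is dominated by a geometric series that depends neither on
`N` nor on `n_i`. Since `1 - β_j` divides `1 - β_j ^ (k + 1)` in `ℤ[β_j]`, every `c_j` is `g_j`
times an algebraic integer and `A` lies in the module generated by `1` and the `g_j` over the
algebraic integers. A common denominator of the finitely many `g_j` therefore serves all `N` and
`n_i`; it exists because inverting the Vandermonde system `G_n = ∑ b_j β_j ^ n` shows that the `b_j`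
are algebraic. Finally `∑ b_j P(β_j)` is a rational combination of the `G_n` for every `P ∈ ℚ[X]`,
and `1 / (1 - β_j ^ m)` is such a polynomial in `β_j`, uniformly in `j`, because the characteristic
polynomial is coprime to `1 - X ^ m`. Hence `A` is rational.
-/

open Finset Polynomial Filter

section PowerSums

variable {ι R A : Type*} {s : Finset ι}

lemma sum_mul_aeval_mem [CommSemiring R] [CommSemiring A] [Algebra R A] {M : Submodule R A}
    {β b : ι → A} (hM : ∀ n : ℕ, ∑ j ∈ s, b j * β j ^ n ∈ M) (P : R[X]) :
    ∑ j ∈ s, b j * aeval (β j) P ∈ M := by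
  simp_rw [aeval_eq_sum_range, Finset.mul_sum, mul_smul_comm]
  rw [Finset.sum_comm]
  simp_rw [← Finset.smul_sum]
  exact M.sum_mem fun n _ => M.smul_mem _ (hM n)

lemma sum_div_aeval_mem [CommSemiring R] [Field A] [Algebra R A] {M : Submodule R A}
    {β b : ι → A} (hM : ∀ n : ℕ, ∑ j ∈ s, b j * β j ^ n ∈ M) {P Q : R[X]} (hPQ : IsCoprime P Q)
    (hP : ∀ j ∈ s, aeval (β j) P = 0) :
    ∑ j ∈ s, b j / aeval (β j) Q ∈ M := by
  obtain ⟨U, V, hUV⟩ := hPQ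
  have inv_eq : ∀ j ∈ s, b j / aeval (β j) Q = b j * aeval (β j) V := fun j hj => by
    have h : aeval (β j) V * aeval (β j) Q = 1 := by
      simpa [hP j hj] using congrArg (aeval (β j)) hUV
    rw [div_eq_mul_inv, eq_inv_of_mul_eq_one_left h]
  rw [Finset.sum_congr rfl inv_eq]
  exact sum_mul_aeval_mem hM V

lemma coeff_mem_of_sum_mul_pow_mem [Field R] [CommRing A] [Algebra R A] {M : Submodule R A}
    {γ : ι → R} {b : ι → A} (hγ : Set.InjOn γ s)
    (hM : ∀ n : ℕ, ∑ j ∈ s, b j * algebraMap R A (γ j) ^ n ∈ M) {j : ι} (hj : j ∈ s) :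
    b j ∈ M := by
  have hmem := sum_mul_aeval_mem hM (Lagrange.basis s γ j)
  simp_rw [aeval_algebraMap_apply_eq_algebraMap_eval] at hmem
  rwa [Finset.sum_eq_single_of_mem j hj, Lagrange.eval_basis_self hγ hj, map_one, mul_one] at hmem
  intro l hl hlj
  rw [Lagrange.eval_basis_of_ne hlj.symm hl, map_zero, mul_zero]

end PowerSums

lemma exists_pos_natCast_mul_isIntegral {κ A : Type*} [Finite κ] [CommRing A] {x : κ → A}
    (hx : ∀ l, IsAlgebraic ℤ (x l)) : ∃ D : ℕ, 0 < D ∧ ∀ l, IsIntegral ℤ (D * x l) := by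
  cases nonempty_fintype κ
  choose m y hm hy using fun l => (hx l).exists_nsmul_eq (integralClosure ℤ A)
  refine ⟨∏ l, m l, Finset.prod_pos fun l _ => Nat.pos_of_ne_zero (hm l), fun l => ?_⟩
  obtain ⟨t, ht⟩ := Finset.dvd_prod_of_mem m (Finset.mem_univ l)
  have hmx : IsIntegral ℤ ((m l : A) * x l) := by
    rw [← nsmul_eq_mul, hy]
    exact (y l).2
  convert (isIntegral_natCast t).mul hmx using 1
  rw [ht]
  push_cast
  ring

lemma isIntegral_mul_div_one_sub {R F : Type*} [CommRing R] [Field F] [Algebra R F] {x b z : F}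
    {m : ℕ} (hz : IsIntegral R z) (hne : 1 - z ^ m ≠ 0)
    (hx : IsIntegral R (x * (b / (1 - z ^ m)))) : IsIntegral R (x * (b / (1 - z))) := by
  have geom := mul_neg_geom_sum z m
  have hne1 : 1 - z ≠ 0 := left_ne_zero_of_mul (geom ▸ hne)
  have factor : x * (b / (1 - z)) = (∑ l ∈ range m, z ^ l) * (x * (b / (1 - z ^ m))) := by
    field_simp
    linear_combination -x * b * geom
  rw [factor]
  exact (IsIntegral.sum _ fun l _ => hz.pow l).mul hx

namespace NumerationSystem

section Digits

variable (S : NumerationSystem)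

lemma G_eq_sum_range_min (k : ℕ) :
    S.G k = ∑ l ∈ range (min k S.d), S.a l * S.G (k - 1 - l) + if k < S.d then 1 else 0 := by
  rcases lt_or_ge k S.d with hk | hk
  · rw [min_eq_left hk.le, if_pos hk]
    rcases k.eq_zero_or_pos with rfl | hk0
    · simp [S.hG0]
    · exact S.hG_small k hk0 hk
  · obtain ⟨n, rfl⟩ := Nat.exists_eq_add_of_le' hk
    rw [min_eq_right hk, if_neg hk.not_gt, S.hG_rec n, add_zero]

lemma G_succ_le (k : ℕ) : S.G (k + 1) ≤ (S.a 0 + 1) * S.G k := by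
  have hd := S.hd
  have hmin : min (k + 1) S.d = min k (S.d - 1) + 1 := by omega
  have shift : ∑ l ∈ range (min k (S.d - 1)), S.a (l + 1) * S.G (k - 1 - l) ≤
      ∑ l ∈ range (min k S.d), S.a l * S.G (k - 1 - l) :=
    calc
      _ ≤ ∑ l ∈ range (min k (S.d - 1)), S.a l * S.G (k - 1 - l) := by
        refine Finset.sum_le_sum fun l hl => Nat.mul_le_mul_right _ (S.ha_anti _ _ l.le_succ ?_)
        have := Finset.mem_range.1 hl
        omega
      _ ≤ _ := Finset.sum_le_sum_of_subset (Finset.range_subset_range.2 (by omega))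
  have carry : (if k + 1 < S.d then 1 else 0) ≤ if k < S.d then 1 else 0 := by
    split_ifs <;> omega
  calc
    S.G (k + 1) = ∑ l ∈ range (min k (S.d - 1)), S.a (l + 1) * S.G (k - 1 - l) + S.a 0 * S.G k
        + if k + 1 < S.d then 1 else 0 := by
      rw [S.G_eq_sum_range_min (k + 1), hmin, Finset.sum_range_succ']
      simp only [Nat.add_sub_cancel, Nat.sub_zero, Nat.sub_sub, Nat.add_comm 1]
    _ ≤ S.a 0 * S.G k + S.G k := by
      have hG := S.G_eq_sum_range_min k
      omega
    _ = (S.a 0 + 1) * S.G k := by ring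

lemma dig_le (N k : ℕ) : S.dig N k ≤ S.a 0 := by
  have hlt : S.dig N k * S.G k < (S.a 0 + 1) * S.G k :=
    calc
      _ ≤ ∑ l ∈ range (k + 1), S.dig N l * S.G l :=
        Finset.single_le_sum (f := fun l => S.dig N l * S.G l) (fun _ _ => Nat.zero_le _)
          (Finset.self_mem_range_succ k)
      _ < S.G (k + 1) := S.hdig_reg N (k + 1)
      _ ≤ _ := S.G_succ_le k
  exact Nat.le_of_lt_succ (lt_of_mul_lt_mul_right hlt (Nat.zero_le _))

end Digits

lemma charPoly_monic (S : NumerationSystem) : S.charPoly.Monic := by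
  refine monic_X_pow_sub ((degree_sum_le _ _).trans_lt ?_)
  rw [Finset.sup_lt_iff (WithBot.bot_lt_coe _)]
  intro l _
  refine (degree_C_mul_X_pow_le _ _).trans_lt ?_
  have := S.hd
  exact_mod_cast (by omega : S.d - 1 - l < S.d)

variable {S : NumerationSystem} {β : ℝ} {βc b : ℕ → ℂ} {j : ℕ}

namespace IsCharRoot

lemma isCoprime_one_sub_X_pow (hβ : S.IsCharRoot β) {m : ℕ} (hm : m ≠ 0) :
    IsCoprime (S.charPoly.map (algebraMap ℤ ℚ)) (1 - X ^ m) := by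
  refine (Irreducible.coprime_iff_not_dvd hβ.1).2 fun hdvd => ?_
  have hroot : aeval β (1 - X ^ m : ℚ[X]) = 0 :=
    aeval_eq_zero_of_dvd_aeval_eq_zero hdvd ((aeval_map_algebraMap ℚ β _).trans hβ.2.1)
  have hpow : 1 - β ^ m = 0 := by simpa using hroot
  linarith [one_lt_pow₀ hβ.2.2.1 hm]

lemma one_sub_pow_ne_zero (hβ : S.IsCharRoot β) {z : ℂ} (hz : aeval z S.charPoly = 0) {m : ℕ}
    (hm : m ≠ 0) : 1 - z ^ m ≠ 0 := by
  have hroot := (aeval_map_algebraMap ℚ z S.charPoly).trans hz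
  simpa using
    (aeval_ne_zero_of_isCoprime (hβ.isCoprime_one_sub_X_pow hm) z).resolve_left (not_not.2 hroot)

end IsCharRoot

namespace IsRootData

lemma isIntegral_root (hr : S.IsRootData βc b) (hj : j < S.d) : IsIntegral ℤ (βc j) :=
  ⟨S.charPoly, S.charPoly_monic, hr.1 j hj⟩

lemma norm_root_lt_one (hr : S.IsRootData βc b) (hβ : S.IsCharRoot β) (h0 : βc 0 = β) (hj1 : 1 ≤ j)
    (hj : j < S.d) : ‖βc j‖ < 1 :=
  hβ.2.2.2 _ (hr.1 j hj) fun e =>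
    Nat.one_le_iff_ne_zero.1 hj1 (hr.2.1 j 0 hj S.hd (e.trans h0.symm))

lemma sum_mul_pow_mem {R : Type*} [CommSemiring R] [Algebra R ℂ] (hr : S.IsRootData βc b) (n : ℕ) :
    ∑ j ∈ range S.d, b j * βc j ^ n ∈ (1 : Submodule R ℂ) := by
  rw [← hr.2.2 n]
  exact Submodule.mem_one.2 ⟨S.G n, map_natCast _ _⟩

lemma isAlgebraic_coeff (hr : S.IsRootData βc b) (hj : j < S.d) : IsAlgebraic ℤ (b j) := by
  have lift_root : ∀ l < S.d, ∃ x : algebraicClosure ℚ ℂ, algebraMap _ ℂ x = βc l := fun l hl =>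
    ⟨⟨βc l, mem_algebraicClosure_iff.2 (hr.isIntegral_root hl).tower_top.isAlgebraic⟩, rfl⟩
  choose! γ hγ using lift_root
  have injOn : Set.InjOn γ (range S.d) := fun l hl m hm e => by
    rw [Finset.mem_coe, Finset.mem_range] at hl hm
    exact hr.2.1 l m hl hm (by rw [← hγ l hl, ← hγ m hm, e])
  have hmem : b j ∈ (1 : Submodule (algebraicClosure ℚ ℂ) ℂ) := by
    refine coeff_mem_of_sum_mul_pow_mem injOn (fun n => ?_) (Finset.mem_range.2 hj)
    convert hr.sum_mul_pow_mem n using 1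
    exact Finset.sum_congr rfl fun l hl => by rw [hγ l (Finset.mem_range.1 hl)]
  obtain ⟨x, hx⟩ := Submodule.mem_one.1 hmem
  rw [IsFractionRing.isAlgebraic_iff ℤ ℚ ℂ, ← hx]
  exact mem_algebraicClosure_iff.1 x.2

lemma isAlgebraic_coeff_div (hr : S.IsRootData βc b) (hj : j < S.d) (m : ℕ) :
    IsAlgebraic ℤ (b j / (1 - βc j ^ m)) := by
  rw [div_eq_mul_inv]
  exact (hr.isAlgebraic_coeff hj).mul
    (isAlgebraic_one.sub ((hr.isIntegral_root hj).isAlgebraic.pow m)).inv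

lemma exists_rat_sum_div_one_sub_pow (hr : S.IsRootData βc b) (hβ : S.IsCharRoot β) {m : ℕ}
    (hm : m ≠ 0) : ∃ q : ℚ, ∑ j ∈ range S.d, b j / (1 - βc j ^ m) = q := by
  have hmem := sum_div_aeval_mem (hr.sum_mul_pow_mem (R := ℚ)) (hβ.isCoprime_one_sub_X_pow hm)
    fun j hj => by rw [aeval_map_algebraMap, hr.1 j (Finset.mem_range.1 hj)]
  obtain ⟨q, hq⟩ := Submodule.mem_one.1 hmem
  exact ⟨q, by simpa using hq.symm⟩

lemma exists_rat_cornerA (hr : S.IsRootData βc b) (hβ : S.IsCharRoot β) (k : ℕ) :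
    ∃ q : ℚ, cornerA S βc b k = q := by
  obtain ⟨q, hq⟩ := hr.exists_rat_sum_div_one_sub_pow hβ one_ne_zero
  obtain ⟨r, hr'⟩ := hr.exists_rat_sum_div_one_sub_pow hβ k.succ_ne_zero
  refine ⟨1 + S.a 0 * q - r, ?_⟩
  simp only [pow_one] at hq
  simp only [cornerA, mul_div_assoc, ← Finset.mul_sum, hq, hr']
  push_cast
  rfl

end IsRootData

end NumerationSystem

section Corner

/-- The constant `A_i` attached to a corner coordinate `h`, as a function of `h`. Every nonzero
value of `h` is treated like `1`. -/
noncomputable def cornerConst (S : NumerationSystem) (βc b : ℕ → ℂ) (k h : ℕ) : ℂ :=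
  if h = 0 then 0 else cornerA S βc b k

/-- The coefficient `c_j^{(i)}` attached to a corner coordinate `h`, as a function of `h`; here `n`
is the index at which the digit sum starts. Every nonzero value of `h` is treated like `1`. -/
noncomputable def cornerCoeff (S : NumerationSystem) (βc b : ℕ → ℂ) (k h N n j : ℕ) : ℂ :=
  if h = 0 then cornerC0 S βc b N n j else cornerC1 S βc b k N n j

variable {S : NumerationSystem} {β : ℝ} {βc b : ℕ → ℂ} {j k : ℕ} {x : ℂ}

lemma norm_cornerC0_le (b : ℕ → ℂ) (hz : ‖βc j‖ < 1) (N n : ℕ) :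
    ‖cornerC0 S βc b N n j‖ ≤ S.a 0 * ‖b j‖ * (1 - ‖βc j‖)⁻¹ := by
  refine tsum_of_norm_bounded ((hasSum_geometric_of_lt_one (norm_nonneg _) hz).mul_left _) ?_
  intro m
  rw [norm_mul, norm_mul, norm_pow, Complex.norm_natCast]
  gcongr
  exact_mod_cast S.dig_le N _

lemma norm_cornerCoeff_le (b : ℕ → ℂ) (hz : ‖βc j‖ < 1) (k h N n : ℕ) :
    ‖cornerCoeff S βc b k h N n j‖ ≤ S.a 0 * ‖b j‖ * (1 - ‖βc j‖)⁻¹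
      + ‖S.a 0 * b j / (1 - βc j)‖ + ‖b j / (1 - βc j ^ (k + 1))‖ := by
  have hC0 := norm_cornerC0_le (S := S) b hz N n
  rw [cornerCoeff]
  split_ifs
  · rw [add_assoc]
    exact le_add_of_le_of_nonneg hC0 (by positivity)
  · refine (norm_add_le _ _).trans (add_le_add ((norm_sub_le _ _).trans (by gcongr)) ?_)
    rw [mul_div_right_comm, norm_mul, norm_pow]
    exact mul_le_of_le_one_right (norm_nonneg _) (pow_le_one₀ (norm_nonneg _) hz.le)

lemma norm_cornerConst_le (S : NumerationSystem) (βc b : ℕ → ℂ) (k h : ℕ) :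
    ‖cornerConst S βc b k h‖ ≤ ‖cornerA S βc b k‖ := by
  rw [cornerConst]
  split_ifs <;> simp

lemma isIntegral_mul_cornerC0 (hz : IsIntegral ℤ (βc j)) (hx : IsIntegral ℤ (x * b j)) (N n : ℕ) :
    IsIntegral ℤ (x * cornerC0 S βc b N n j) := by
  obtain ⟨K, hK, -⟩ := S.hdig_fin N
  have hzero : ∀ m ∉ range K, (S.dig N (n + m) : ℂ) * b j * βc j ^ m = 0 := fun m hm => by
    rw [hK _ (le_add_left (not_lt.1 (mt Finset.mem_range.2 hm)))]
    simp
  rw [cornerC0, tsum_eq_sum hzero, Finset.mul_sum]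
  refine IsIntegral.sum _ fun m _ => ?_
  convert ((isIntegral_natCast (S.dig N (n + m))).mul hx).mul (hz.pow m) using 1
  ring

lemma isIntegral_mul_cornerCoeff (hz : IsIntegral ℤ (βc j)) (hne : 1 - βc j ^ (k + 1) ≠ 0)
    (hx : IsIntegral ℤ (x * (b j / (1 - βc j ^ (k + 1))))) (h N n : ℕ) :
    IsIntegral ℤ (x * cornerCoeff S βc b k h N n j) := by
  have hb : IsIntegral ℤ (x * b j) := by
    have hmul := hx.mul (isIntegral_one.sub (hz.pow (k + 1)))
    rwa [mul_assoc, div_mul_cancel₀ _ hne] at hmul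
  have hC0 := isIntegral_mul_cornerC0 (S := S) hz hb N n
  rw [cornerCoeff]
  split_ifs
  · exact hC0
  · have expand : x * cornerC1 S βc b k N n j =
        x * cornerC0 S βc b N n j - S.a 0 * (x * (b j / (1 - βc j)))
          + βc j ^ ((n + k) / (k + 1) * (k + 1) - n) * (x * (b j / (1 - βc j ^ (k + 1)))) := by
      rw [cornerC1]
      ring
    rw [expand]
    exact (hC0.sub ((isIntegral_natCast _).mul (isIntegral_mul_div_one_sub hz hne hx))).add
      ((hz.pow _).mul hx)

lemma isIntegral_mul_cornerConst (hz : ∀ j < S.d, IsIntegral ℤ (βc j))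
    (hne : ∀ j < S.d, 1 - βc j ^ (k + 1) ≠ 0) (hx : IsIntegral ℤ x)
    (hxb : ∀ j < S.d, IsIntegral ℤ (x * (b j / (1 - βc j ^ (k + 1))))) (h : ℕ) :
    IsIntegral ℤ (x * cornerConst S βc b k h) := by
  rw [cornerConst]
  split_ifs
  · simp [isIntegral_zero]
  · rw [cornerA, mul_sub, mul_add, mul_one, Finset.mul_sum, Finset.mul_sum]
    refine (hx.add (.sum _ fun j hj => ?_)).sub (.sum _ fun j hj => hxb j (Finset.mem_range.1 hj))
    rw [Finset.mem_range] at hj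
    rw [mul_div_assoc, mul_left_comm]
    exact (isIntegral_natCast _).mul (isIntegral_mul_div_one_sub (hz j hj) (hne j hj) (hxb j hj))

lemma exists_rat_cornerConst (hr : S.IsRootData βc b) (hβ : S.IsCharRoot β) (k h : ℕ) :
    ∃ q : ℚ, cornerConst S βc b k h = q := by
  rw [cornerConst]
  split_ifs
  · exact ⟨0, by simp⟩
  · exact hr.exists_rat_cornerA hβ k

end Corner

section CornerTuple

variable {ι : Type*} [Finite ι] {S : ι → NumerationSystem} {β : ι → ℝ} {βc bb : ι → ℕ → ℂ}

lemma exists_corner_common_denominator (hβ : ∀ i, (S i).IsCharRoot (β i))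
    (hroot : ∀ i, (S i).IsRootData (βc i) (bb i)) (kk : ι → ℕ) :
    ∃ D : ℕ, 0 < D ∧
      (∀ i, ∀ j < (S i).d, ∀ h N n,
        IsIntegral ℤ ((D : ℂ) * cornerCoeff (S i) (βc i) (bb i) (kk i) h N n j)) ∧
      ∀ i h, IsIntegral ℤ ((D : ℂ) * cornerConst (S i) (βc i) (bb i) (kk i) h) := by
  obtain ⟨D, hD0, hD⟩ := exists_pos_natCast_mul_isIntegral
    (fun p : Σ i, Fin (S i).d => (hroot p.1).isAlgebraic_coeff_div p.2.isLt (kk p.1 + 1))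
  have hne : ∀ i, ∀ j < (S i).d, 1 - βc i j ^ (kk i + 1) ≠ 0 := fun i j hj =>
    (hβ i).one_sub_pow_ne_zero ((hroot i).1 j hj) (kk i).succ_ne_zero
  exact ⟨D, hD0,
    fun i j hj => isIntegral_mul_cornerCoeff ((hroot i).isIntegral_root hj) (hne i j hj)
      (hD ⟨i, j, hj⟩),
    fun i => isIntegral_mul_cornerConst (fun _ => (hroot i).isIntegral_root) (hne i)
      (isIntegral_natCast D) fun j hj => hD ⟨i, j, hj⟩⟩

lemma eventually_norm_cornerCoeff_le (hβ : ∀ i, (S i).IsCharRoot (β i))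
    (hroot : ∀ i, (S i).IsRootData (βc i) (bb i)) (hβc0 : ∀ i, βc i 0 = β i) (kk : ι → ℕ) :
    ∀ᶠ C : ℝ in atTop, ∀ i, ∀ j ∈ Set.Ico 1 (S i).d, ∀ h N n,
      ‖cornerCoeff (S i) (βc i) (bb i) (kk i) h N n j‖ ≤ C := by
  refine eventually_all.2 fun i => (eventually_all_finite (Set.finite_Ico 1 _)).2 fun j hj => ?_
  filter_upwards [eventually_ge_atTop _] with C hC h N n using
    (norm_cornerCoeff_le _ ((hroot i).norm_root_lt_one (hβ i) (hβc0 i) hj.1 hj.2) _ _ _ _).trans hC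

lemma eventually_norm_cornerConst_le (S : ι → NumerationSystem) (βc bb : ι → ℕ → ℂ) (kk : ι → ℕ) :
    ∀ᶠ C : ℝ in atTop, ∀ i h, ‖cornerConst (S i) (βc i) (bb i) (kk i) h‖ ≤ C := by
  refine eventually_all.2 fun i => ?_
  filter_upwards [eventually_ge_atTop _] with C hC h using (norm_cornerConst_le _ _ _ _ h).trans hC

end CornerTuple

theorem c_A_D_bounded_general {ι : Type*} [Finite ι] (S : ι → NumerationSystem) (β : ι → ℝ)
    (hβ : ∀ i, (S i).IsCharRoot (β i))
    (βc bb : ι → ℕ → ℂ) (hroot : ∀ i, (S i).IsRootData (βc i) (bb i))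
    (hβc0 : ∀ i, βc i 0 = (β i : ℂ)) (kk : ι → ℕ) :
    (∃ C : ℝ, 0 < C ∧ ∀ (h n : ι → ℕ) (N : ℕ),
      (∀ i j, 1 ≤ j → j < (S i).d →
        ‖cornerCoeff (S i) (βc i) (bb i) (kk i) (h i) N (n i) j‖ ≤ C) ∧
      (∀ i, ‖cornerConst (S i) (βc i) (bb i) (kk i) (h i)‖ ≤ C) ∧
      ∃ D : ℕ, IsLeast {D' : ℕ | 0 < D' ∧
          (∀ i j, j < (S i).d →
            IsIntegral ℤ ((D' : ℂ) * cornerCoeff (S i) (βc i) (bb i) (kk i) (h i) N (n i) j)) ∧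
          (∀ i, IsIntegral ℤ ((D' : ℂ) * cornerConst (S i) (βc i) (bb i) (kk i) (h i)))} D ∧
        (D : ℝ) ≤ C) ∧
    ∀ i h, ∃ q : ℚ, cornerConst (S i) (βc i) (bb i) (kk i) h = q := by
  refine ⟨?_, fun i => exists_rat_cornerConst (hroot i) (hβ i) (kk i)⟩
  obtain ⟨D, hD0, hDc, hDA⟩ := exists_corner_common_denominator hβ hroot kk
  obtain ⟨C, ⟨⟨hC0, hcC⟩, hAC⟩, hDC⟩ := (((eventually_gt_atTop (0 : ℝ)).and
    (eventually_norm_cornerCoeff_le hβ hroot hβc0 kk)).and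
    (eventually_norm_cornerConst_le S βc bb kk)).and (eventually_ge_atTop (D : ℝ)) |>.exists
  refine ⟨C, hC0, fun h n N => ⟨fun i j h1 hj => hcC i j ⟨h1, hj⟩ _ _ _, fun i => hAC i _, ?_⟩⟩
  refine ⟨_, isLeast_csInf ⟨D, ?D_mem⟩, (Nat.cast_le.2 (Nat.sInf_le ?D_mem)).trans hDC⟩
  exact ⟨hD0, fun i j hj => hDc i j hj _ _ _, fun i => hDA i _⟩

/-- The quantities `c_j^{(i)}` (for `j ≠ 1`, i.e. index `1 ≤ j` here),
the constants `A_i` and the common denominator `D` are bounded by a constant depending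
only on the tuple of numeration systems; moreover each `A_i` is rational. -/
theorem c_A_D_bounded
    (s : ℕ) (hs : 1 ≤ s) (S : Fin s → NumerationSystem) (β : Fin s → ℝ)
    (hβ : ∀ i, (S i).IsCharRoot (β i))
    (h : Fin s → ℕ) (hh : ∀ i, h i ≤ 1)
    (βc bb : Fin s → ℕ → ℂ) (hroot : ∀ i, (S i).IsRootData (βc i) (bb i))
    (hβc0 : ∀ i, βc i 0 = (β i : ℂ))
    (kk : Fin s → ℕ) (hkk : ∀ i, (S i).IsPlateau (kk i))
    (A : Fin s → ℂ)
    (hA : ∀ i, A i = if h i = 0 then 0 else cornerA (S i) (βc i) (bb i) (kk i))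
    (n : Fin s → ℕ → ℕ)
    (hn0 : ∀ i N, 0 < N → h i = 0 →
      (S i).dig N (n i N) ≠ 0 ∧ ∀ l, l < n i N → (S i).dig N l = 0)
    (hn1 : ∀ i N, 0 < N → h i = 1 →
      (∀ l, l < n i N → (S i).dig N l = maxPattern ((S i).a 0) (kk i) l) ∧
      (S i).dig N (n i N) ≠ maxPattern ((S i).a 0) (kk i) (n i N))
    (c : Fin s → ℕ → ℕ → ℂ)
    (hc : ∀ i j N, c i j N =
      if h i = 0 then cornerC0 (S i) (βc i) (bb i) N (n i N) j
      else cornerC1 (S i) (βc i) (bb i) (kk i) N (n i N) j) :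
    ∃ C : ℝ, 0 < C ∧
      (∀ N : ℕ, 0 < N → ∀ i j, 1 ≤ j → j < (S i).d → ‖c i j N‖ ≤ C) ∧
      (∀ i, ‖A i‖ ≤ C) ∧
      (∀ N : ℕ, 0 < N → ∀ D : ℕ,
        IsLeast {D' : ℕ | 0 < D' ∧
            (∀ i j, j < (S i).d → IsIntegral ℤ ((D' : ℂ) * c i j N)) ∧
            (∀ i, IsIntegral ℤ ((D' : ℂ) * A i))} D →
        (D : ℝ) ≤ C) ∧
      (∀ i, ∃ q : ℚ, A i = (q : ℂ)) := by
  obtain ⟨⟨C, hC0, hC⟩, hrat⟩ := c_A_D_bounded_general S β hβ βc bb hroot hβc0 kk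
  have hA' : A = fun i => cornerConst (S i) (βc i) (bb i) (kk i) (h i) := funext hA
  have hc' : c = fun i j N => cornerCoeff (S i) (βc i) (bb i) (kk i) (h i) N (n i N) j :=
    funext fun i => funext fun j => funext (hc i j)
  subst hA' hc'
  refine ⟨C, hC0, fun N _ => (hC h (n · N) N).1, (hC h (n · 0) 0).2.1, fun N _ D hD => ?_,
    fun i => hrat i (h i)⟩
  obtain ⟨D', hD', hD'C⟩ := (hC h (n · N) N).2.2
  rwa [hD.unique hD']
end
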